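/- Let d ≥ 1, let A ≥ 0, and let (α_{k,b})_{(k,b) ∈ Λ} be real coefficients with |α_{k,b}| ≤ A · 2^{−(2k/d + k/2)} for all (k,b) ∈ Λ. Then for every x ∈ ℝ^d and every integer K, Σ_{(k,b) ∈ Λ, k > K} |α_{k,b}| |ψ_{k,b}(x)| ≤ (12^d A / 4) · 2^{−2(K+1)/d} / (1 − 2^{−2/d}). In particular, if f(x) = Σ_{(k,b) ∈ Λ} α_{k,b} ψ_{k,b}(x) with the series converging absolutely at every x, and f_K(x) = Σ_{(k,b) ∈ Λ, k ≤ K} α_{k,b} ψ_{k,b}(x), then |f(x) − f_K(x)| ≤ (12^d A / 4) · 2^{−2(K+1)/d} / (1 − 2^{−2/d}) for every x ∈ ℝ^d. -/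

import Mathlib

open MeasureTheory

/-- The rectifier (ReLU) function. -/
noncomputable def rect (x : ℝ) : ℝ := max 0 x

/-- The trapezoid function `t`: equal to 2 on [-1,1], vanishing outside (-3,3), linear between. -/
noncomputable def trap (x : ℝ) : ℝ := rect (x + 3) - rect (x + 1) - rect (x - 1) + rect (x - 3)

/-- The scaling ("father") function `φ(x) = C_d · rect(Σ_j t(x_j) − 2(d−1))` on `ℝ^d`. -/
noncomputable def scalingFn (d : ℕ) (Cd : ℝ) (x : EuclideanSpace ℝ (Fin d)) : ℝ :=
  Cd * rect ((∑ j, trap (x j)) - 2 * ((d : ℝ) - 1))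

/-- The ("mother") wavelet `ψ(x) = φ(x) − 2⁻¹ φ(2^{−1/d} x)`. -/
noncomputable def psiFn (d : ℕ) (Cd : ℝ) (x : EuclideanSpace ℝ (Fin d)) : ℝ :=
  scalingFn d Cd x - 2⁻¹ * scalingFn d Cd (((2 : ℝ) ^ (-(1 : ℝ) / d)) • x)

/-- The wavelet term `ψ_{k,b}(x) = 2^{k/2} ψ(2^{k/d}(x − b))`. -/
noncomputable def psikb (d : ℕ) (Cd : ℝ) (k : ℤ) (b x : EuclideanSpace ℝ (Fin d)) : ℝ :=
  (2 : ℝ) ^ ((k : ℝ) / 2) * psiFn d Cd (((2 : ℝ) ^ ((k : ℝ) / d)) • (x - b))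

/-- The index set `Λ = {(k,b) : k ∈ ℤ, b ∈ 2^{−k/d} ℤ^d}`. -/
def latticeSet (d : ℕ) : Set (ℤ × EuclideanSpace ℝ (Fin d)) :=
  {p | ∀ j, ∃ n : ℤ, p.2 j = (n : ℝ) * (2 : ℝ) ^ (-(p.1 : ℝ) / d)}

theorem trap_eq (x : ℝ) : trap x = max 0 (min 2 (3 - |x|)) := by
  unfold trap rect
  rcases abs_cases x with ⟨h, _⟩ | ⟨h, _⟩ <;> rw [h] <;>
  rcases max_cases 0 (x + 3) with ⟨h1, _⟩ | ⟨h1, _⟩ <;>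
  rcases max_cases 0 (x + 1) with ⟨h2, _⟩ | ⟨h2, _⟩ <;>
  rcases max_cases 0 (x - 1) with ⟨h3, _⟩ | ⟨h3, _⟩ <;>
  rcases max_cases 0 (x - 3) with ⟨h4, _⟩ | ⟨h4, _⟩ <;> rw [h1, h2, h3, h4] <;> grind

theorem trap_le_two (x : ℝ) : trap x ≤ 2 := by
  rw [trap_eq]; exact max_le (by norm_num) (min_le_left _ _)

theorem trap_of_le_one (x : ℝ) (h : |x| ≤ 1) : trap x = 2 := by
  rw [trap_eq, min_eq_left (by linarith)]; norm_num

theorem trap_of_three_le (x : ℝ) (h : 3 ≤ |x|) : trap x = 0 := by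
  rw [trap_eq]; exact max_eq_left ((min_le_right _ _).trans (by linarith))

theorem trap_mono (x s : ℝ) (h0 : 0 ≤ s) (h1 : s ≤ 1) : trap x ≤ trap (s * x) := by
  rw [trap_eq, trap_eq]
  have : |s * x| ≤ |x| := by
    rw [abs_mul, abs_of_nonneg h0]; nlinarith [abs_nonneg x]
  gcongr

theorem scalingFn_nonneg (d : ℕ) (Cd : ℝ) (hCd : 0 < Cd) (x : EuclideanSpace ℝ (Fin d)) :
    0 ≤ scalingFn d Cd x := mul_nonneg hCd.le (le_max_left _ _)

theorem scalingFn_le (d : ℕ) (Cd : ℝ) (hCd : 0 < Cd) (x : EuclideanSpace ℝ (Fin d)) :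
    scalingFn d Cd x ≤ 2 * Cd := by
  have h : ∑ j, trap (x j) ≤ 2 * (d : ℝ) := by
    refine (Finset.sum_le_sum (fun j _ => trap_le_two (x j))).trans ?_
    simp [mul_comm]
  have h2 : rect ((∑ j, trap (x j)) - 2 * ((d : ℝ) - 1)) ≤ 2 :=
    max_le (by norm_num) (by linarith)
  unfold scalingFn
  nlinarith

theorem scalingFn_cube (d : ℕ) (Cd : ℝ) (x : EuclideanSpace ℝ (Fin d))
    (hx : ∀ j, |x j| ≤ 1) : scalingFn d Cd x = 2 * Cd := by
  have h : ∑ j, trap (x j) = 2 * (d : ℝ) := by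
    rw [Finset.sum_congr rfl (fun j _ => trap_of_le_one (x j) (hx j))]
    simp [mul_comm]
  unfold scalingFn rect
  rw [h, show 2 * (d : ℝ) - 2 * ((d : ℝ) - 1) = 2 by ring]
  norm_num [mul_comm]

theorem scalingFn_zero (d : ℕ) (Cd : ℝ) (x : EuclideanSpace ℝ (Fin d))
    (j : Fin d) (hx : 3 ≤ |x j|) : scalingFn d Cd x = 0 := by
  have h : ∑ j, trap (x j) ≤ 2 * ((d : ℝ) - 1) := by
    rw [← Finset.add_sum_erase _ _ (Finset.mem_univ j), trap_of_three_le _ hx, zero_add]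
    refine (Finset.sum_le_sum (fun j _ => trap_le_two (x j))).trans ?_
    have : 1 ≤ d := by have := j.2; omega
    simp [Finset.card_erase_of_mem, mul_comm, Nat.cast_sub this]
  unfold scalingFn rect
  rw [max_eq_left (by linarith), mul_zero]

theorem scalingFn_mono (d : ℕ) (Cd : ℝ) (hCd : 0 < Cd) (x : EuclideanSpace ℝ (Fin d))
    (s : ℝ) (h0 : 0 ≤ s) (h1 : s ≤ 1) : scalingFn d Cd x ≤ scalingFn d Cd (s • x) := by
  unfold scalingFn rect
  have : ∑ j, trap (x j) ≤ ∑ j, trap ((s • x) j) :=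
    Finset.sum_le_sum (fun j _ => trap_mono (x j) s h0 h1)
  gcongr

theorem Cd_le (d : ℕ) (hd : 1 ≤ d) (Cd : ℝ) (hCd : 0 < Cd)
    (hnorm : ∫ x : EuclideanSpace ℝ (Fin d), scalingFn d Cd x = 1) : Cd ≤ 1 / 4 := by
  have hint : Integrable (fun x : EuclideanSpace ℝ (Fin d) => scalingFn d Cd x) := by
    by_contra h
    rw [integral_undef h] at hnorm
    norm_num at hnorm
  set S : Set (EuclideanSpace ℝ (Fin d)) :=
    (WithLp.ofLp) ⁻¹' (Set.univ.pi fun _ : Fin d => Set.Icc (-1 : ℝ) 1) with hS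
  have hmeas : MeasurableSet (Set.univ.pi fun _ : Fin d => Set.Icc (-1 : ℝ) 1) :=
    MeasurableSet.univ_pi fun _ => measurableSet_Icc
  have hSm : MeasurableSet S := (PiLp.volume_preserving_ofLp (Fin d)).measurable hmeas
  have hvol : volume S = 2 ^ d := by
    rw [hS, (PiLp.volume_preserving_ofLp (Fin d)).measure_preimage hmeas.nullMeasurableSet,
      volume_pi_pi]
    simp only [Real.volume_Icc, Finset.prod_const, Finset.card_univ, Fintype.card_fin]
    norm_num
  have h1 : ∫ x in S, scalingFn d Cd x ≤ 1 := by
    rw [← hnorm]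
    exact setIntegral_le_integral hint (Filter.Eventually.of_forall
      fun x => scalingFn_nonneg d Cd hCd x)
  have h2 : ∫ x in S, scalingFn d Cd x = 2 ^ d * (2 * Cd) := by
    rw [setIntegral_congr_fun hSm (g := fun _ => 2 * Cd) (fun x hx => scalingFn_cube d Cd x
      (fun j => abs_le.2 (hx j (Set.mem_univ j))))]
    simp [Measure.real, hvol]
  rw [h2] at h1
  have h3 : (2 : ℝ) ≤ 2 ^ d := by
    simpa using pow_le_pow_right₀ (by norm_num : (1 : ℝ) ≤ 2) hd
  nlinarith

theorem psiFn_abs_le (d : ℕ) (Cd : ℝ) (hCd : 0 < Cd)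
    (x : EuclideanSpace ℝ (Fin d)) : |psiFn d Cd x| ≤ Cd := by
  have hs : (2 : ℝ) ^ (-(1 : ℝ) / d) ≤ 1 :=
    Real.rpow_le_one_of_one_le_of_nonpos (by norm_num)
      (div_nonpos_of_nonpos_of_nonneg (by norm_num) (by positivity))
  have h1 := scalingFn_mono d Cd hCd x _ (by positivity) hs
  have h2 := scalingFn_le d Cd hCd x
  have h3 := scalingFn_le d Cd hCd (((2 : ℝ) ^ (-(1 : ℝ) / d)) • x)
  have h4 := scalingFn_nonneg d Cd hCd x
  unfold psiFn
  rw [abs_le]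
  constructor <;> linarith

theorem psiFn_zero (d : ℕ) (hd : 1 ≤ d) (Cd : ℝ) (x : EuclideanSpace ℝ (Fin d))
    (j : Fin d) (hx : 6 ≤ |x j|) : psiFn d Cd x = 0 := by
  have hs : 1 / 2 ≤ (2 : ℝ) ^ (-(1 : ℝ) / d) := by
    have h : (2 : ℝ) ^ (-1 : ℝ) ≤ (2 : ℝ) ^ (-(1 : ℝ) / d) := by
      apply Real.rpow_le_rpow_of_exponent_le (by norm_num)
      have : (1 : ℝ) ≤ d := by exact_mod_cast hd
      rw [neg_div, neg_le_neg_iff, div_le_one (by linarith)]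
      exact this
    rw [Real.rpow_neg_one] at h
    linarith
  unfold psiFn
  rw [scalingFn_zero d Cd x j (by linarith), scalingFn_zero d Cd _ j]
  · ring
  · rw [PiLp.smul_apply, smul_eq_mul, abs_mul, abs_of_nonneg (by positivity)]
    nlinarith

/-- Lattice point at level `k`. -/
noncomputable def latPt (d : ℕ) (k : ℤ) (n : Fin d → ℤ) : EuclideanSpace ℝ (Fin d) :=
  WithLp.toLp 2 fun j => (n j : ℝ) * (2 : ℝ) ^ (-(k : ℝ) / d)

theorem latPt_mem (d : ℕ) (k : ℤ) (n : Fin d → ℤ) : (k, latPt d k n) ∈ latticeSet d :=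
  fun j => ⟨n j, rfl⟩

theorem psikb_latPt_zero (d : ℕ) (hd : 1 ≤ d) (Cd : ℝ) (k : ℤ) (n : Fin d → ℤ)
    (x : EuclideanSpace ℝ (Fin d))
    (hn : n ∉ Fintype.piFinset fun j => Finset.Icc (⌊(2 : ℝ) ^ ((k : ℝ) / d) * x j⌋ - 5)
      (⌊(2 : ℝ) ^ ((k : ℝ) / d) * x j⌋ + 6)) :
    psikb d Cd k (latPt d k n) x = 0 := by
  rw [Fintype.mem_piFinset] at hn
  push Not at hn
  obtain ⟨j, hj⟩ := hn
  unfold psikb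
  rw [psiFn_zero d hd Cd _ j, mul_zero]
  have e : ((2 : ℝ) ^ ((k : ℝ) / d) • (x - latPt d k n)) j =
      (2 : ℝ) ^ ((k : ℝ) / d) * x j - n j := by
    have : (2 : ℝ) ^ ((k : ℝ) / d) * (2 : ℝ) ^ (-(k : ℝ) / d) = 1 := by
      rw [← Real.rpow_add (by norm_num), neg_div, add_neg_cancel, Real.rpow_zero]
    simp only [PiLp.smul_apply, PiLp.sub_apply, smul_eq_mul, latPt]
    linear_combination (-(n j : ℝ)) * this
  rw [e]
  set v := (2 : ℝ) ^ ((k : ℝ) / d) * x j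
  have f1 := Int.floor_le v
  have f2 := Int.lt_floor_add_one v
  rw [Finset.mem_Icc, not_and_or] at hj
  rcases hj with hj | hj
  · have : n j + 6 ≤ ⌊v⌋ := by omega
    have : (n j : ℝ) + 6 ≤ ⌊v⌋ := by exact_mod_cast this
    exact le_trans (by linarith) (le_abs_self _)
  · have : ⌊v⌋ + 7 ≤ n j := by omega
    have : (⌊v⌋ : ℝ) + 7 ≤ n j := by exact_mod_cast this
    exact le_trans (by linarith) (neg_le_abs _)

theorem term_le (d : ℕ) (Cd : ℝ) (hCd : 0 < Cd) (hC4 : Cd ≤ 1 / 4)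
    (A : ℝ) (hA : 0 ≤ A) (α : ℤ → EuclideanSpace ℝ (Fin d) → ℝ)
    (hα : ∀ (k : ℤ) (b : EuclideanSpace ℝ (Fin d)), (k, b) ∈ latticeSet d →
      |α k b| ≤ A * (2 : ℝ) ^ (-(2 * (k : ℝ) / d + (k : ℝ) / 2)))
    (k : ℤ) (b x : EuclideanSpace ℝ (Fin d)) (hb : (k, b) ∈ latticeSet d) :
    |α k b| * |psikb d Cd k b x| ≤ A / 4 * (2 : ℝ) ^ (-(2 * (k : ℝ) / d)) := by
  have h1 := hα k b hb
  have h2 : |psikb d Cd k b x| ≤ (2 : ℝ) ^ ((k : ℝ) / 2) * (1 / 4) := by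
    unfold psikb
    rw [abs_mul, abs_of_nonneg (by positivity)]
    gcongr
    exact (psiFn_abs_le d Cd hCd _).trans hC4
  calc _ ≤ (A * (2 : ℝ) ^ (-(2 * (k : ℝ) / d + (k : ℝ) / 2))) *
        ((2 : ℝ) ^ ((k : ℝ) / 2) * (1 / 4)) := by gcongr
    _ = A / 4 * ((2 : ℝ) ^ (-(2 * (k : ℝ) / d + (k : ℝ) / 2)) * (2 : ℝ) ^ ((k : ℝ) / 2)) := by
        ring
    _ = _ := by
        rw [← Real.rpow_add (by norm_num)]
        congr 2
        ring

theorem level_le (d : ℕ) (hd : 1 ≤ d) (Cd : ℝ) (hCd : 0 < Cd) (hC4 : Cd ≤ 1 / 4)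
    (A : ℝ) (hA : 0 ≤ A) (α : ℤ → EuclideanSpace ℝ (Fin d) → ℝ)
    (hα : ∀ (k : ℤ) (b : EuclideanSpace ℝ (Fin d)), (k, b) ∈ latticeSet d →
      |α k b| ≤ A * (2 : ℝ) ^ (-(2 * (k : ℝ) / d + (k : ℝ) / 2)))
    (k : ℤ) (x : EuclideanSpace ℝ (Fin d)) :
    ∑' n : Fin d → ℤ, ENNReal.ofReal (|α k (latPt d k n)| * |psikb d Cd k (latPt d k n) x|) ≤
      ENNReal.ofReal (12 ^ d * A / 4 * (2 : ℝ) ^ (-(2 * (k : ℝ) / d))) := by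
  rw [tsum_eq_sum (s := Fintype.piFinset fun j =>
      Finset.Icc (⌊(2 : ℝ) ^ ((k : ℝ) / d) * x j⌋ - 5)
      (⌊(2 : ℝ) ^ ((k : ℝ) / d) * x j⌋ + 6))]
  · rw [← ENNReal.ofReal_sum_of_nonneg (fun _ _ => by positivity)]
    apply ENNReal.ofReal_le_ofReal
    refine (Finset.sum_le_card_nsmul _ _ _ (fun n _ =>
      term_le d Cd hCd hC4 A hA α hα k _ x (latPt_mem d k n))).trans ?_
    have : ∀ m : ℤ, (m + 6 + 1 - (m - 5)).toNat = 12 := fun m => by omega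
    simp only [Fintype.card_piFinset, Int.card_Icc, this, Finset.prod_const, Finset.card_univ,
      Fintype.card_fin, nsmul_eq_mul]
    push_cast
    apply le_of_eq
    ring
  · intro n hn
    rw [psikb_latPt_zero d hd Cd k n x hn]
    simp

theorem part_one (d : ℕ) (hd : 1 ≤ d) (Cd : ℝ) (hCd : 0 < Cd) (hC4 : Cd ≤ 1 / 4)
    (A : ℝ) (hA : 0 ≤ A) (α : ℤ → EuclideanSpace ℝ (Fin d) → ℝ)
    (hα : ∀ (k : ℤ) (b : EuclideanSpace ℝ (Fin d)), (k, b) ∈ latticeSet d →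
      |α k b| ≤ A * (2 : ℝ) ^ (-(2 * (k : ℝ) / d + (k : ℝ) / 2)))
    (x : EuclideanSpace ℝ (Fin d)) (K : ℤ) :
    (∑' q : {p : ℤ × EuclideanSpace ℝ (Fin d) // p ∈ latticeSet d ∧ K < p.1},
        ENNReal.ofReal (|α q.1.1 q.1.2| * |psikb d Cd q.1.1 q.1.2 x|)) ≤
      ENNReal.ofReal ((12 ^ d * A / 4) * (2 : ℝ) ^ (-(2 * ((K : ℝ) + 1)) / d) /
        (1 - (2 : ℝ) ^ (-(2 : ℝ) / d))) := by
  let e : ℕ × (Fin d → ℤ) → {p : ℤ × EuclideanSpace ℝ (Fin d) // p ∈ latticeSet d ∧ K < p.1} :=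
    fun q => ⟨(K + 1 + q.1, latPt d (K + 1 + q.1) q.2), latPt_mem d _ _, by
      show K < K + 1 + (q.1 : ℤ)
      omega⟩
  have he : Function.Surjective e := by
    rintro ⟨⟨k, b⟩, hb, hk⟩
    have hb' := hb
    choose n hn using hb'
    have hk' : K < k := hk
    obtain ⟨m, hm⟩ : ∃ m : ℕ, k = K + 1 + m := ⟨(k - (K + 1)).toNat, by omega⟩
    subst hm
    refine ⟨(m, n), ?_⟩
    apply Subtype.ext
    refine Prod.ext rfl ?_
    ext j
    exact (hn j).symm
  have hr0 : (0 : ℝ) ≤ (2 : ℝ) ^ (-(2 : ℝ) / d) := by positivity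
  have hr1 : (2 : ℝ) ^ (-(2 : ℝ) / d) < 1 := by
    apply Real.rpow_lt_one_of_one_lt_of_neg (by norm_num)
    have : (0 : ℝ) < d := by exact_mod_cast hd
    exact div_neg_of_neg_of_pos (by norm_num) this
  have hgeo := (hasSum_geometric_of_lt_one hr0 hr1).mul_left
    ((12 ^ d * A / 4) * (2 : ℝ) ^ (-(2 * ((K : ℝ) + 1)) / d))
  refine (ENNReal.tsum_le_tsum_comp_of_surjective he _).trans ?_
  rw [ENNReal.tsum_prod']
  rw [div_eq_mul_inv, ← hgeo.tsum_eq,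
    ENNReal.ofReal_tsum_of_nonneg (fun n => by positivity) hgeo.summable]
  refine ENNReal.tsum_le_tsum fun m => ?_
  refine (level_le d hd Cd hCd hC4 A hA α hα (K + 1 + m) x).trans (le_of_eq ?_)
  congr 1
  rw [mul_assoc (12 ^ d * A / 4)]
  congr 1
  rw [← Real.rpow_natCast, ← Real.rpow_mul (by norm_num), ← Real.rpow_add (by norm_num)]
  congr 1
  push_cast
  ring

theorem abs_tsum_le_aux {ι : Type*} (S2 : Set ι) (g : ι → ℝ)
    (hL : Summable fun q : S2 => |g q|) : abs (∑' q : S2, g q) ≤ ∑' q : S2, |g q| := by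
  have h3 : Summable (fun q : S2 => ‖g q‖) := by
    simpa only [Real.norm_eq_abs] using hL
  have h4 := norm_tsum_le_tsum_norm h3
  simpa only [Real.norm_eq_abs] using h4

theorem tsum_le_aux {ι : Type*} (S2 : Set ι) (g : ι → ℝ) (B : ℝ) (hB0 : 0 ≤ B)
    (hs2a : Summable fun q : S2 => |g q|)
    (h1 : ∑' q : S2, ENNReal.ofReal (|g q|) ≤ ENNReal.ofReal B) : ∑' q : S2, |g q| ≤ B := by
  rw [← ENNReal.ofReal_le_ofReal_iff hB0,
    ENNReal.ofReal_tsum_of_nonneg (fun q => abs_nonneg _) hs2a]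
  exact h1

theorem summable_aux {ι : Type*} (S2 : Set ι) (g : ι → ℝ)
    (hL : Summable fun q : S2 => |g q|) : Summable (g ∘ ((↑) : S2 → _)) := Summable.of_abs hL

theorem summable_sub_aux {ι : Type*} (S T : Set ι) (h : S ⊆ T) (g : ι → ℝ)
    (hL : Summable fun q : T => |g q|) : Summable fun q : S => |g q| :=
  hL.comp_injective (Set.inclusion_injective h)

theorem split_aux {ι : Type*} (S1 S2 : Set ι) (hD : Disjoint S1 S2) (g : ι → ℝ) (B : ℝ)
    (hB0 : 0 ≤ B) (hL : Summable fun q : (S1 ∪ S2 : Set ι) => |g q|)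
    (h1 : ∑' q : S2, ENNReal.ofReal (|g q|) ≤ ENNReal.ofReal B) :
    |(∑' q : (S1 ∪ S2 : Set ι), g q) - ∑' q : S1, g q| ≤ B := by
  have hs1a := summable_sub_aux S1 (S1 ∪ S2) Set.subset_union_left g hL
  have hs2a := summable_sub_aux S2 (S1 ∪ S2) Set.subset_union_right g hL
  have hT := Summable.tsum_union_disjoint hD (summable_aux S1 g hs1a) (summable_aux S2 g hs2a)
  rw [hT, add_sub_cancel_left]
  exact (abs_tsum_le_aux S2 g hs2a).trans (tsum_le_aux S2 g B hB0 hs2a h1)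

theorem split_bound {ι : Type*} (L S1 S2 : Set ι) (hU : L = S1 ∪ S2) (hD : Disjoint S1 S2)
    (g : ι → ℝ) (B : ℝ) (hB0 : 0 ≤ B)
    (hL : Summable fun q : L => |g q|)
    (h1 : ∑' q : S2, ENNReal.ofReal (|g q|) ≤ ENNReal.ofReal B) :
    |(∑' q : L, g q) - ∑' q : S1, g q| ≤ B := by
  subst hU
  exact split_aux S1 S2 hD g B hB0 hL h1

theorem statement10 (d : ℕ) (hd : 1 ≤ d) (Cd : ℝ) (hCd : 0 < Cd)
    (hnorm : ∫ x : EuclideanSpace ℝ (Fin d), scalingFn d Cd x = 1)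
    (A : ℝ) (hA : 0 ≤ A) (α : ℤ → EuclideanSpace ℝ (Fin d) → ℝ)
    (hα : ∀ (k : ℤ) (b : EuclideanSpace ℝ (Fin d)), (k, b) ∈ latticeSet d →
      |α k b| ≤ A * (2 : ℝ) ^ (-(2 * (k : ℝ) / d + (k : ℝ) / 2)))
    (x : EuclideanSpace ℝ (Fin d)) (K : ℤ) :
    (∑' q : {p : ℤ × EuclideanSpace ℝ (Fin d) // p ∈ latticeSet d ∧ K < p.1},
        ENNReal.ofReal (|α q.1.1 q.1.2| * |psikb d Cd q.1.1 q.1.2 x|)) ≤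
      ENNReal.ofReal ((12 ^ d * A / 4) * (2 : ℝ) ^ (-(2 * ((K : ℝ) + 1)) / d) /
        (1 - (2 : ℝ) ^ (-(2 : ℝ) / d))) ∧
    ∀ f fK : EuclideanSpace ℝ (Fin d) → ℝ,
      (∀ y, Summable fun q : {p : ℤ × EuclideanSpace ℝ (Fin d) // p ∈ latticeSet d} =>
        |α q.1.1 q.1.2 * psikb d Cd q.1.1 q.1.2 y|) →
      (∀ y, f y = ∑' q : {p : ℤ × EuclideanSpace ℝ (Fin d) // p ∈ latticeSet d},
        α q.1.1 q.1.2 * psikb d Cd q.1.1 q.1.2 y) →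
      (∀ y, fK y = ∑' q : {p : ℤ × EuclideanSpace ℝ (Fin d) // p ∈ latticeSet d ∧ p.1 ≤ K},
        α q.1.1 q.1.2 * psikb d Cd q.1.1 q.1.2 y) →
      |f x - fK x| ≤ (12 ^ d * A / 4) * (2 : ℝ) ^ (-(2 * ((K : ℝ) + 1)) / d) /
        (1 - (2 : ℝ) ^ (-(2 : ℝ) / d)) := by
  have h1 := part_one d hd Cd hCd (Cd_le d hd Cd hCd hnorm) A hA α hα x K
  refine ⟨h1, ?_⟩
  intro f fK hsum hf hfK
  rw [hf x, hfK x]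
  have hr1 : (2 : ℝ) ^ (-(2 : ℝ) / d) ≤ 1 :=
    Real.rpow_le_one_of_one_le_of_nonpos (by norm_num)
      (div_nonpos_of_nonpos_of_nonneg (by norm_num) (by positivity))
  refine split_bound (latticeSet d) {p | p ∈ latticeSet d ∧ p.1 ≤ K}
    {p | p ∈ latticeSet d ∧ K < p.1} ?_ (Set.disjoint_left.2 fun p h h' => not_lt.2 h.2 h'.2)
    (fun p => α p.1 p.2 * psikb d Cd p.1 p.2 x) _
    (div_nonneg (by positivity) (by linarith)) (hsum x) ?_
  · ext p
    simp only [Set.mem_union, Set.mem_ofPred_eq, ← and_or_left]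
    exact ⟨fun h => ⟨h, le_or_gt p.1 K⟩, fun h => h.1⟩
  · simp only [abs_mul]
    exact h1
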